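/- arXiv:1612.04008 — 2 statements merged into one kernel-verified Lean document; each statement's English description precedes it below -/
import Mathlib

section
/- Let n be a positive integer and s ∈ (0,1) with n > 2s. There exists a constant C > 0 such that for all y ∈ ℝ^n: ∫_{ℝ^n} |y−z|^{−(n−2s)} (1+|z|)^{−n} dz ≤ C max(1, log|y|) · (1+|y|)^{−(n−2s)}. -/
/-!
Write `d` for the dimension, `a = d - 2s` and `ρ = (1 + |y|) / 2`. Where `|y - z| < ρ` one has
`1 + |z| ≥ ρ`, so the weight is at most `ρ ^ (-d)` and the singularity integrates to a multiple of
`ρ ^ (d - a)`. Where `|y - z| ≥ ρ`, the kernel is at most `ρ ^ (-a)`, and integrating the weight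
over `|z| ≤ |y|` produces the factor `log (1 + |y|)`; for `|z| > |y|` one uses instead
`1 + |z| ≤ 3 |y - z|`, and the tail of `(1 + |z|) ^ (-d - a)` is a multiple of `(1 + |y|) ^ (-a)`.
-/

open MeasureTheory Measure Set Metric Module

section RealIntegrals

lemma integral_Ioi_add_rpow_of_lt {p c m : ℝ} (hp : p < -1) (hc : -m < c) :
    ∫ t in Ioi c, (t + m) ^ p = -(c + m) ^ (p + 1) / (p + 1) := by
  have h := (measurePreserving_add_right volume m).setIntegral_preimage_emb
    (measurableEmbedding_addRight m) (fun t : ℝ => t ^ p) (Ioi (c + m))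
  rwa [preimage_add_const_Ioi, add_sub_cancel_right,
    integral_Ioi_rpow_of_lt hp (by linarith)] at h

lemma pow_mul_one_add_rpow_le (k : ℕ) (q : ℝ) {t : ℝ} (ht : 0 ≤ t) :
    t ^ k * (1 + t) ^ q ≤ (1 + t) ^ (k + q) := by
  rw [Real.rpow_add (by positivity), Real.rpow_natCast]
  gcongr
  linarith

lemma log_one_add_le_two_mul_max_one_log {r : ℝ} (hr : 0 ≤ r) :
    Real.log (1 + r) ≤ 2 * max 1 (Real.log r) := by
  have hposLog : Real.log (1 + r) ≤ Real.log 2 + max 0 (Real.log r) := by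
    have h := Real.posLog_add (x := 1) (y := r)
    rw [Real.posLog_eq_log (by rw [abs_of_nonneg] <;> linarith)] at h
    simpa [Real.posLog_apply] using h
  have hmax : max 0 (Real.log r) ≤ max 1 (Real.log r) := by gcongr; exact zero_le_one
  linarith [Real.log_two_lt_d9, le_max_left 1 (Real.log r)]

end RealIntegrals

section Translation

lemma preimage_sub_left_ball_zero {E : Type*} [SeminormedAddCommGroup E] (y : E) (r : ℝ) :
    (fun z => y - z) ⁻¹' ball 0 r = ball y r := by
  ext z
  rw [mem_preimage, mem_ball_zero_iff, mem_ball', dist_eq_norm_sub]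

variable {E F : Type*} [NormedAddCommGroup E] [MeasurableSpace E] [BorelSpace E]
  [NormedAddCommGroup F] (μ : Measure E) [μ.IsAddLeftInvariant] [μ.IsNegInvariant]

lemma integrableOn_ball_comp_sub_left_iff {f : E → F} {y : E} {r : ℝ} :
    IntegrableOn (fun z => f (y - z)) (ball y r) μ ↔ IntegrableOn f (ball 0 r) μ := by
  rw [← preimage_sub_left_ball_zero]
  exact (measurePreserving_sub_left μ y).integrableOn_comp_preimage
    (MeasurableEquiv.subLeft y).measurableEmbedding

lemma setIntegral_ball_comp_sub_left [NormedSpace ℝ F] (f : E → F) (y : E) (r : ℝ) :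
    ∫ z in ball y r, f (y - z) ∂μ = ∫ z in ball 0 r, f z ∂μ := by
  rw [← preimage_sub_left_ball_zero]
  exact (measurePreserving_sub_left μ y).setIntegral_preimage_emb
    (MeasurableEquiv.subLeft y).measurableEmbedding f (ball 0 r)

end Translation

section Radial

variable {E F : Type*} [NormedAddCommGroup E] [NormedSpace ℝ E] [FiniteDimensional ℝ E]
  [Nontrivial E] [MeasurableSpace E] [BorelSpace E] [NormedAddCommGroup F] [NormedSpace ℝ F]
  (μ : Measure E) [μ.IsAddHaarMeasure]

lemma toSphere_real_univ_pos : 0 < μ.toSphere.real univ := by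
  rw [toSphere_real_apply_univ]
  have : 0 < finrank ℝ E := finrank_pos
  have : 0 < μ.real (ball 0 1) :=
    ENNReal.toReal_pos (measure_ball_pos μ 0 one_pos).ne' measure_ball_lt_top.ne
  positivity

lemma setIntegral_norm_preimage_fun_norm (f : ℝ → F) {S : Set ℝ} (hS : MeasurableSet S) :
    ∫ z in norm ⁻¹' S, f ‖z‖ ∂μ =
      μ.toSphere.real univ • ∫ t in Ioi 0 ∩ S, t ^ (finrank ℝ E - 1) • f t := by
  calc ∫ z in norm ⁻¹' S, f ‖z‖ ∂μ
      = ∫ z, S.indicator f ‖z‖ ∂μ := (integral_indicator (measurable_norm hS)).symm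
    _ = μ.toSphere.real univ •
          ∫ t in Ioi 0, t ^ (finrank ℝ E - 1) • S.indicator f t := by
        rw [integral_fun_norm_addHaar, toSphere_real_apply_univ, ← nsmul_eq_mul, smul_assoc]
    _ = _ := by
        simp_rw [← indicator_smul]
        rw [setIntegral_indicator hS]

lemma setIntegral_ball_norm_rpow {p r : ℝ} (hp : -(finrank ℝ E : ℝ) < p) (hr : 0 ≤ r) :
    ∫ z in ball 0 r, ‖z‖ ^ p ∂μ =
      μ.toSphere.real univ * (r ^ (finrank ℝ E + p) / (finrank ℝ E + p)) := by
  have hball : ball (0 : E) r = norm ⁻¹' Iio r := by ext; simp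
  have hpow : ∀ t ∈ Ioo 0 r,
      t ^ (finrank ℝ E - 1) • t ^ p = t ^ (finrank ℝ E - 1 + p : ℝ) := fun t ht => by
    rw [smul_eq_mul, Real.rpow_add ht.1, ← Nat.cast_pred finrank_pos,
      Real.rpow_natCast]
  rw [hball, setIntegral_norm_preimage_fun_norm μ (· ^ p) measurableSet_Iio, Ioi_inter_Iio,
    setIntegral_congr_fun measurableSet_Ioo hpow, ← integral_Ioc_eq_integral_Ioo,
    ← intervalIntegral.integral_of_le hr, integral_rpow (Or.inl (by linarith)),
    show (finrank ℝ E - 1 + p + 1 : ℝ) = finrank ℝ E + p by ring,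
    Real.zero_rpow (by linarith), sub_zero, smul_eq_mul]

lemma setIntegral_one_add_norm_rpow_le {q : ℝ} {S : Set ℝ} (hS : MeasurableSet S)
    (hint : IntegrableOn (fun t : ℝ => (1 + t) ^ (finrank ℝ E - 1 + q)) (Ioi 0 ∩ S)) :
    ∫ z in norm ⁻¹' S, (1 + ‖z‖) ^ q ∂μ ≤
      μ.toSphere.real univ * ∫ t in Ioi 0 ∩ S, (1 + t) ^ (finrank ℝ E - 1 + q) := by
  rw [setIntegral_norm_preimage_fun_norm μ (fun t => (1 + t) ^ q) hS, smul_eq_mul]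
  have hpos : ∀ᵐ t ∂volume.restrict (Ioi 0 ∩ S), 0 < t :=
    (ae_restrict_mem (measurableSet_Ioi.inter hS)).mono fun _ ht => ht.1
  refine mul_le_mul_of_nonneg_left ?_ measureReal_nonneg
  refine integral_mono_of_nonneg (hpos.mono fun t ht => ?_) hint (hpos.mono fun t ht => ?_)
  · simp only [Pi.zero_apply, smul_eq_mul]
    positivity
  · simpa only [Nat.cast_pred finrank_pos, smul_eq_mul] using
      pow_mul_one_add_rpow_le (finrank ℝ E - 1) q ht.le

lemma setIntegral_closedBall_one_add_norm_rpow_neg_finrank_le {r : ℝ} (hr : 0 ≤ r) :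
    ∫ z in closedBall 0 r, (1 + ‖z‖) ^ (-(finrank ℝ E : ℝ)) ∂μ ≤
      μ.toSphere.real univ * Real.log (1 + r) := by
  have hball : closedBall (0 : E) r = norm ⁻¹' Iic r := by ext; simp
  have hexp : (finrank ℝ E - 1 + -(finrank ℝ E : ℝ)) = -1 := by ring
  have hle := setIntegral_one_add_norm_rpow_le μ (q := -(finrank ℝ E : ℝ))
    (measurableSet_Iic (a := r))
  simp only [Ioi_inter_Iic, hexp, Real.rpow_neg_one] at hle
  have hint : IntegrableOn (fun t : ℝ => (1 + t)⁻¹) (Ioc 0 r) :=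
    (ContinuousOn.inv₀ (by fun_prop) fun t ht => by linarith [ht.1]).integrableOn_Icc.mono_set
      Ioc_subset_Icc_self
  rw [hball]
  refine (hle hint).trans_eq ?_
  rw [← intervalIntegral.integral_of_le hr,
    intervalIntegral.integral_comp_add_left (fun t => t⁻¹),
    integral_inv_of_pos (by norm_num) (by linarith)]
  simp

lemma setIntegral_compl_closedBall_one_add_norm_rpow_le {a r : ℝ} (ha : 0 < a) (hr : 0 ≤ r) :
    ∫ z in (closedBall 0 r)ᶜ, (1 + ‖z‖) ^ (-(finrank ℝ E + a)) ∂μ ≤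
      μ.toSphere.real univ * ((1 + r) ^ (-a) / a) := by
  have hball : (closedBall (0 : E) r)ᶜ = norm ⁻¹' Ioi r := by ext; simp
  have hexp : (finrank ℝ E - 1 + -(finrank ℝ E + a) : ℝ) = -a - 1 := by ring
  have hle := setIntegral_one_add_norm_rpow_le μ (q := -(finrank ℝ E + a))
    (measurableSet_Ioi (a := r))
  simp only [Ioi_inter_Ioi, sup_eq_right.2 hr, hexp, add_comm (1 : ℝ)] at hle
  simp only [hball, add_comm (1 : ℝ)]
  refine (hle (integrableOn_add_rpow_Ioi_of_lt (by linarith) (by linarith))).trans_eq ?_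
  rw [integral_Ioi_add_rpow_of_lt (by linarith) (by linarith), sub_add_cancel, neg_div_neg_eq]

lemma integrableOn_ball_norm_rpow {p : ℝ} (hp : -(finrank ℝ E : ℝ) < p) (r : ℝ) :
    IntegrableOn (fun z => ‖z‖ ^ p) (ball 0 r) μ := by
  refine integrableOn_ball_of_norm_le_rpow (C := 1) (α := -p) finrank_pos (by linarith)
    (.of_forall fun z => ?_) (Measurable.aestronglyMeasurable (by fun_prop))
  rw [neg_neg, one_mul, Real.norm_of_nonneg (by positivity)]

end Radial

section Majorant

variable {E : Type*} [NormedAddCommGroup E]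

lemma norm_sub_rpow_mul_one_add_norm_rpow_le_of_norm_sub_le {d a : ℝ} (hd : 0 ≤ d) {y z : E}
    (h : ‖y - z‖ ≤ (1 + ‖y‖) / 2) :
    ‖y - z‖ ^ (-a) * (1 + ‖z‖) ^ (-d) ≤ ((1 + ‖y‖) / 2) ^ (-d) * ‖y - z‖ ^ (-a) := by
  have hz : (1 + ‖y‖) / 2 ≤ 1 + ‖z‖ := by linarith [norm_le_norm_sub_add y z]
  rw [mul_comm]
  gcongr ?_ * _
  exact Real.rpow_le_rpow_of_nonpos (by positivity) hz (by linarith)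

lemma norm_sub_rpow_le_of_le_norm_sub {a : ℝ} (ha : 0 ≤ a) {y z : E}
    (h : (1 + ‖y‖) / 2 ≤ ‖y - z‖) : ‖y - z‖ ^ (-a) ≤ ((1 + ‖y‖) / 2) ^ (-a) :=
  Real.rpow_le_rpow_of_nonpos (by positivity) h (by linarith)

lemma norm_sub_rpow_le_three_rpow_mul_of_le_norm_sub {a : ℝ} (ha : 0 ≤ a) {y z : E}
    (h : (1 + ‖y‖) / 2 ≤ ‖y - z‖) : ‖y - z‖ ^ (-a) ≤ 3 ^ a * (1 + ‖z‖) ^ (-a) := by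
  have hz : (1 + ‖z‖) / 3 ≤ ‖y - z‖ := by
    linarith [norm_le_norm_sub_add z y, norm_sub_rev y z]
  calc ‖y - z‖ ^ (-a) ≤ ((1 + ‖z‖) / 3) ^ (-a) :=
        Real.rpow_le_rpow_of_nonpos (by positivity) hz (by linarith)
    _ = 3 ^ a * (1 + ‖z‖) ^ (-a) := by
        rw [Real.div_rpow (by positivity) (by norm_num), Real.rpow_neg (by norm_num : (0 : ℝ) ≤ 3)]
        field_simp

/-- A majorant of `z ↦ ‖y - z‖ ^ (-a) * (1 + ‖z‖) ^ (-d)`, with one term for the part of the space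
near `y`, one for the ball of radius `‖y‖` about `0` and one for the complement of that ball. The
first part may overlap the other two: only an upper bound is wanted. -/
noncomputable def rieszMajorant (d a : ℝ) (y z : E) : ℝ :=
  ((1 + ‖y‖) / 2) ^ (-d) * (ball y ((1 + ‖y‖) / 2)).indicator (fun z => ‖y - z‖ ^ (-a)) z +
    ((1 + ‖y‖) / 2) ^ (-a) * (closedBall 0 ‖y‖).indicator (fun z => (1 + ‖z‖) ^ (-d)) z +
    3 ^ a * (closedBall 0 ‖y‖)ᶜ.indicator (fun z => (1 + ‖z‖) ^ (-(d + a))) z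

lemma norm_sub_rpow_mul_one_add_norm_rpow_le_rieszMajorant {d a : ℝ} (hd : 0 ≤ d) (ha : 0 ≤ a)
    (y z : E) : ‖y - z‖ ^ (-a) * (1 + ‖z‖) ^ (-d) ≤ rieszMajorant d a y z := by
  have hmid := indicator_nonneg (s := closedBall 0 ‖y‖) (f := fun z : E => (1 + ‖z‖) ^ (-d))
    (fun _ _ => by positivity) z
  have hfar := indicator_nonneg (s := (closedBall 0 ‖y‖)ᶜ)
    (f := fun z : E => (1 + ‖z‖) ^ (-(d + a))) (fun _ _ => by positivity) z
  by_cases hyz : z ∈ ball y ((1 + ‖y‖) / 2)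
  · rw [rieszMajorant, indicator_of_mem hyz, add_assoc]
    refine le_add_of_le_of_nonneg ?_ (by positivity)
    rw [mem_ball', dist_eq_norm_sub] at hyz
    exact norm_sub_rpow_mul_one_add_norm_rpow_le_of_norm_sub_le hd hyz.le
  have hsep : (1 + ‖y‖) / 2 ≤ ‖y - z‖ := by
    rwa [mem_ball', dist_eq_norm_sub, not_lt] at hyz
  by_cases hz : z ∈ closedBall 0 ‖y‖
  · have hle := norm_sub_rpow_le_of_le_norm_sub ha hsep
    rw [rieszMajorant, indicator_of_notMem hyz, indicator_of_mem hz,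
      indicator_of_notMem (notMem_compl_iff.2 hz), mul_zero, zero_add, mul_zero, add_zero]
    gcongr
  · have hle := norm_sub_rpow_le_three_rpow_mul_of_le_norm_sub ha hsep
    rw [rieszMajorant, indicator_of_notMem hyz, indicator_of_notMem hz,
      indicator_of_mem (mem_compl hz), mul_zero, zero_add, mul_zero, zero_add, neg_add,
      Real.rpow_add (by positivity), mul_comm ((1 + ‖z‖) ^ (-d)), ← mul_assoc]
    gcongr

variable [NormedSpace ℝ E] [FiniteDimensional ℝ E] [Nontrivial E] [MeasurableSpace E]
  [BorelSpace E] (μ : Measure E) [μ.IsAddHaarMeasure]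

lemma integrable_rieszMajorant_and_integral_eq {a : ℝ} (ha : 0 < a) (had : a < finrank ℝ E)
    (y : E) :
    Integrable (rieszMajorant (finrank ℝ E) a y) μ ∧
      ∫ z, rieszMajorant (finrank ℝ E) a y z ∂μ =
        ((1 + ‖y‖) / 2) ^ (-(finrank ℝ E : ℝ)) *
            ∫ z in ball y ((1 + ‖y‖) / 2), ‖y - z‖ ^ (-a) ∂μ +
          ((1 + ‖y‖) / 2) ^ (-a) *
            ∫ z in closedBall 0 ‖y‖, (1 + ‖z‖) ^ (-(finrank ℝ E : ℝ)) ∂μ +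
          3 ^ a * ∫ z in (closedBall 0 ‖y‖)ᶜ, (1 + ‖z‖) ^ (-(finrank ℝ E + a)) ∂μ := by
  have hnear : IntegrableOn (fun z => ‖y - z‖ ^ (-a)) (ball y ((1 + ‖y‖) / 2)) μ :=
    (integrableOn_ball_comp_sub_left_iff μ (f := fun z => ‖z‖ ^ (-a))).2
      (integrableOn_ball_norm_rpow μ (by linarith) _)
  have hmid : IntegrableOn (fun z : E => (1 + ‖z‖) ^ (-(finrank ℝ E : ℝ)))
      (closedBall 0 ‖y‖) μ := by
    refine ContinuousOn.integrableOn_compact (isCompact_closedBall 0 ‖y‖) ?_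
    exact ContinuousOn.rpow_const (by fun_prop) fun z _ => Or.inl (by positivity)
  have hfar : IntegrableOn (fun z : E => (1 + ‖z‖) ^ (-(finrank ℝ E + a)))
      (closedBall 0 ‖y‖)ᶜ μ := (integrable_one_add_norm (by linarith)).integrableOn
  have hnear' := (hnear.integrable_indicator measurableSet_ball).const_mul
    (((1 + ‖y‖) / 2) ^ (-(finrank ℝ E : ℝ)))
  have hmid' := (hmid.integrable_indicator measurableSet_closedBall).const_mul
    (((1 + ‖y‖) / 2) ^ (-a))
  have hfar' := (hfar.integrable_indicator measurableSet_closedBall.compl).const_mul (3 ^ a)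
  refine ⟨(hnear'.add hmid').add hfar', ?_⟩
  refine (integral_add (hnear'.add hmid') hfar').trans ?_
  rw [integral_add' hnear' hmid']
  simp only [integral_const_mul, integral_indicator measurableSet_ball,
    integral_indicator measurableSet_closedBall, integral_indicator measurableSet_closedBall.compl]

lemma integral_rieszMajorant_le {a : ℝ} (ha : 0 < a) (had : a < finrank ℝ E) (y : E) :
    ∫ z, rieszMajorant (finrank ℝ E) a y z ∂μ ≤ μ.toSphere.real univ *
      (2 ^ a / (finrank ℝ E - a) + 2 ^ a * Real.log (1 + ‖y‖) + 3 ^ a / a) *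
        (1 + ‖y‖) ^ (-a) := by
  set ρ := (1 + ‖y‖) / 2 with hρ
  have hρ_pos : 0 < ρ := by positivity
  have hρ_rpow : ρ ^ (-a) = 2 ^ a * (1 + ‖y‖) ^ (-a) := by
    rw [hρ, Real.div_rpow (by positivity) zero_le_two, Real.rpow_neg zero_le_two, div_inv_eq_mul,
      mul_comm]
  have hnear : ρ ^ (-(finrank ℝ E : ℝ)) * ∫ z in ball y ρ, ‖y - z‖ ^ (-a) ∂μ =
      μ.toSphere.real univ / (finrank ℝ E - a) * ρ ^ (-a) := by
    have hscale : ρ ^ (-a) = ρ ^ (-(finrank ℝ E : ℝ)) * ρ ^ (finrank ℝ E + -a) := by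
      rw [← Real.rpow_add hρ_pos, neg_add_cancel_left]
    rw [setIntegral_ball_comp_sub_left μ (fun z => ‖z‖ ^ (-a)),
      setIntegral_ball_norm_rpow μ (by linarith) hρ_pos.le, hscale]
    ring
  calc ∫ z, rieszMajorant (finrank ℝ E) a y z ∂μ
      ≤ μ.toSphere.real univ / (finrank ℝ E - a) * ρ ^ (-a) +
          ρ ^ (-a) * (μ.toSphere.real univ * Real.log (1 + ‖y‖)) +
          3 ^ a * (μ.toSphere.real univ * ((1 + ‖y‖) ^ (-a) / a)) := by
        rw [(integrable_rieszMajorant_and_integral_eq μ ha had y).2, hnear]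
        gcongr
        · exact setIntegral_closedBall_one_add_norm_rpow_neg_finrank_le μ (norm_nonneg y)
        · exact setIntegral_compl_closedBall_one_add_norm_rpow_le μ ha (norm_nonneg y)
    _ = _ := by
        rw [hρ_rpow]
        ring

end Majorant

theorem stmt_2_general {E : Type*} [NormedAddCommGroup E] [NormedSpace ℝ E]
    [FiniteDimensional ℝ E] [MeasurableSpace E] [BorelSpace E] (μ : Measure E)
    [μ.IsAddHaarMeasure] {a : ℝ} (ha : 0 < a) (had : a < finrank ℝ E) :
    ∃ C > (0 : ℝ), ∀ y : E,
      Integrable (fun z => ‖y - z‖ ^ (-a) * (1 + ‖z‖) ^ (-(finrank ℝ E : ℝ))) μ ∧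
        ∫ z, ‖y - z‖ ^ (-a) * (1 + ‖z‖) ^ (-(finrank ℝ E : ℝ)) ∂μ ≤
          C * max 1 (Real.log ‖y‖) * (1 + ‖y‖) ^ (-a) := by
  have : Nontrivial E := nontrivial_of_finrank_pos (R := ℝ) (by exact_mod_cast ha.trans had)
  have := toSphere_real_univ_pos μ
  have : 0 < finrank ℝ E - a := sub_pos.2 had
  refine ⟨μ.toSphere.real univ * (2 ^ a / (finrank ℝ E - a) + 2 ^ a * 2 + 3 ^ a / a),
    by positivity, fun y => ?_⟩
  have hle := norm_sub_rpow_mul_one_add_norm_rpow_le_rieszMajorant (finrank ℝ E).cast_nonneg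
    ha.le y
  have hmaj := (integrable_rieszMajorant_and_integral_eq μ ha had y).1
  have hint : Integrable (fun z => ‖y - z‖ ^ (-a) * (1 + ‖z‖) ^ (-(finrank ℝ E : ℝ))) μ := by
    refine hmaj.mono' (Measurable.aestronglyMeasurable (by fun_prop)) (.of_forall fun z => ?_)
    rw [Real.norm_of_nonneg (by positivity)]
    exact hle z
  refine ⟨hint, (integral_mono hint hmaj hle).trans
    ((integral_rieszMajorant_le μ ha had y).trans ?_)⟩
  rw [mul_assoc _ _ (max 1 _), add_mul, add_mul, mul_assoc _ (2 : ℝ)]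
  gcongr
  · exact le_mul_of_one_le_right (by positivity) (le_max_left _ _)
  · exact log_one_add_le_two_mul_max_one_log (norm_nonneg y)
  · exact le_mul_of_one_le_right (by positivity) (le_max_left _ _)

theorem stmt_2 (n : ℕ) (hn0 : 0 < n) (s : ℝ) (hs0 : 0 < s) (hs1 : s < 1)
    (hns : 2 * s < (n : ℝ)) :
    ∃ C > (0 : ℝ), ∀ y : EuclideanSpace ℝ (Fin n),
      (∫ z : EuclideanSpace ℝ (Fin n),
          ‖y - z‖ ^ (-((n : ℝ) - 2 * s)) * (1 + ‖z‖) ^ (-(n : ℝ))) ≤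
        C * max 1 (Real.log ‖y‖) * (1 + ‖y‖) ^ (-((n : ℝ) - 2 * s)) := by
  obtain ⟨C, hC, h⟩ := stmt_2_general (volume : Measure (EuclideanSpace ℝ (Fin n)))
    (sub_pos.2 hns) (by rw [finrank_euclideanSpace_fin]; linarith)
  exact ⟨C, hC, fun y => by simpa only [finrank_euclideanSpace_fin] using (h y).2⟩
end

section
/- For every θ > k there exists a constant C = C(θ, k, n) > 1, independent of m and l, such that for all i and all y ∈ B_i^c ∩ B_{i,m} ∩ Ω_i: 1/( C (1+|y−X^i|)^{θ−k} (λl)^k ) ≤ Σ_{j=1}^{(m+1)^k} (1+|y−X^j|)^{−θ} ≤ C/( (1+|y−X^i|)^{θ−k} (λl)^k ). -/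
/-- `X` enumerates the lattice points `{d·q : q ∈ ([0,m+1)^k × {0}) ∩ ℤ^n}` (with spacing `d = λl`). -/
def latticeEnum (n k m : ℕ) (d : ℝ)
    (X : Fin ((m + 1) ^ k) → EuclideanSpace ℝ (Fin n)) : Prop :=
  Function.Injective X ∧
  (∀ i, ∃ q : Fin n → ℤ,
      (∀ j : Fin n, (j : ℕ) < k → 0 ≤ q j ∧ q j ≤ (m : ℤ)) ∧
      (∀ j : Fin n, k ≤ (j : ℕ) → q j = 0) ∧
      (∀ j : Fin n, X i j = d * (q j : ℝ))) ∧
  (∀ q : Fin n → ℤ,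
      (∀ j : Fin n, (j : ℕ) < k → 0 ≤ q j ∧ q j ≤ (m : ℤ)) →
      (∀ j : Fin n, k ≤ (j : ℕ) → q j = 0) →
      ∃ i, ∀ j : Fin n, X i j = d * (q j : ℝ))

/-!
Let `p j` be the integer coordinate vector of `X j`, and write `1 + |y - X i| = dρ`, so that
`1 ≤ ρ ≤ m`. Minimality of `|y - X i|` and the triangle inequality make `1 + |y - X j|` comparable
to `d (ρ + ‖p i - p j‖)`, with the sup norm on `ℤᵏ`. The sum is thus at most a multiple of
`d ^ (-θ) ∑ q ∈ ℤᵏ, (ρ + ‖q‖) ^ (-θ)`. As `‖q‖` dominates each coordinate `|q c|`, every term here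
is at most the product over `c` of `(ρ + |q c|) ^ (-θ / k)`, so the sum over `ℤᵏ` is at most the
`k`-th power of a one-dimensional sum, which the integral test bounds by a multiple of
`ρ ^ (1 - θ / k)`. For the reverse inequality, a cube of side `⌊ρ⌋` containing `p i` fits into the
grid because `ρ ≤ m`; it has at least `ρ ^ k` lattice points, all giving points `X j` at distance
`O(dρ)` from `y`.
-/

open Finset Real

theorem sum_natAbs_le_two_mul {f : ℕ → ℝ} {B : ℝ} (hf : ∀ a, 0 ≤ f a)
    (hB : ∀ N, ∑ a ∈ range N, f a ≤ B) (s : Finset ℤ) : ∑ a ∈ s, f a.natAbs ≤ 2 * B := by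
  have sum_le_of_injOn (u : Finset ℤ) (hu : Set.InjOn Int.natAbs u) :
      ∑ a ∈ u, f a.natAbs ≤ B := by
    obtain ⟨N, hN⟩ := exists_nat_subset_range (u.image Int.natAbs)
    calc ∑ a ∈ u, f a.natAbs = ∑ a ∈ u.image Int.natAbs, f a := (sum_image hu).symm
      _ ≤ ∑ a ∈ range N, f a := sum_le_sum_of_subset_of_nonneg hN fun a _ _ ↦ hf a
      _ ≤ B := hB N
  rw [← sum_filter_add_sum_filter_not s (0 ≤ ·), two_mul]
  exact add_le_add
    (sum_le_of_injOn _ <| Int.injOn_natAbs_Ici.mono fun a ha ↦ (mem_filter.1 ha).2)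
    (sum_le_of_injOn _ <| Int.injOn_natAbs_Iic.mono fun a ha ↦ (not_le.1 (mem_filter.1 ha).2).le)

theorem sum_range_add_rpow_neg_le {α x : ℝ} (hα : 1 < α) (hx : 1 ≤ x) (N : ℕ) :
    ∑ a ∈ range N, (x + a) ^ (-α) ≤ α / (α - 1) * x ^ (1 - α) := by
  have hx₀ : 0 < x := by linarith
  have tail_le : ∑ a ∈ range N, (x + (a + 1 : ℕ)) ^ (-α) ≤ x ^ (1 - α) / (α - 1) := by
    have hanti : AntitoneOn (· ^ (-α) : ℝ → ℝ) (Set.Icc x (x + N)) := fun a ha b _ hab ↦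
      rpow_le_rpow_of_nonpos (by linarith [ha.1]) hab (by linarith)
    have hzero : (0 : ℝ) ∉ Set.uIcc x (x + N) := by
      rw [Set.uIcc_of_le (by simp)]
      exact fun h ↦ hx₀.not_ge h.1
    calc ∑ a ∈ range N, (x + (a + 1 : ℕ)) ^ (-α)
        ≤ ∫ t in x..x + N, t ^ (-α) := hanti.sum_le_integral
      _ = (x ^ (1 - α) - (x + N) ^ (1 - α)) / (α - 1) := by
        rw [integral_rpow (.inr ⟨by linarith, hzero⟩), ← neg_div_neg_eq]
        ring_nf
      _ ≤ x ^ (1 - α) / (α - 1) := by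
        have : 0 ≤ α - 1 := by linarith
        gcongr
        exact sub_le_self _ (by positivity)
  have head_le : x ^ (-α) ≤ x ^ (1 - α) := rpow_le_rpow_of_exponent_le hx (by linarith)
  calc ∑ a ∈ range N, (x + a) ^ (-α) ≤ ∑ a ∈ range (N + 1), (x + a) ^ (-α) :=
        sum_le_sum_of_subset_of_nonneg (range_mono N.le_succ) fun a _ _ ↦ by positivity
    _ = ∑ a ∈ range N, (x + (a + 1 : ℕ)) ^ (-α) + x ^ (-α) := by simp [sum_range_succ']
    _ ≤ x ^ (1 - α) / (α - 1) + x ^ (1 - α) := add_le_add tail_le head_le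
    _ = α / (α - 1) * x ^ (1 - α) := by
      have : α - 1 ≠ 0 := by linarith
      field_simp
      ring

theorem sum_int_add_norm_rpow_neg_le {α x : ℝ} (hα : 1 < α) (hx : 1 ≤ x) (s : Finset ℤ) :
    ∑ a ∈ s, (x + ‖a‖) ^ (-α) ≤ 2 * α / (α - 1) * x ^ (1 - α) := by
  have h := sum_natAbs_le_two_mul (f := fun a ↦ (x + a) ^ (-α)) (fun a ↦ by positivity)
    (sum_range_add_rpow_neg_le hα hx) s
  simp only [Nat.cast_natAbs, Int.cast_abs, ← Int.norm_eq_abs] at h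
  rwa [mul_div_assoc, mul_assoc]

theorem sum_prod_apply_le_pow {ι κ : Type*} [Fintype ι] {f : κ → ℝ} {B : ℝ} (hf : ∀ a, 0 ≤ f a)
    (hB : ∀ t : Finset κ, ∑ a ∈ t, f a ≤ B) (s : Finset (ι → κ)) :
    ∑ p ∈ s, ∏ c, f (p c) ≤ B ^ Fintype.card ι := by
  classical
  have hsub : s ⊆ Fintype.piFinset fun c ↦ s.image (· c) := fun p hp ↦
    Fintype.mem_piFinset.2 fun c ↦ mem_image_of_mem _ hp
  calc ∑ p ∈ s, ∏ c, f (p c)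
      ≤ ∑ p ∈ Fintype.piFinset fun c ↦ s.image (· c), ∏ c, f (p c) :=
        sum_le_sum_of_subset_of_nonneg hsub fun p _ _ ↦ prod_nonneg fun c _ ↦ hf _
    _ = ∏ c, ∑ a ∈ s.image (· c), f a := (prod_univ_sum _ _).symm
    _ ≤ ∏ _c : ι, B := prod_le_prod (fun c _ ↦ sum_nonneg fun a _ ↦ hf a) fun c _ ↦ hB _
    _ = B ^ Fintype.card ι := by simp

theorem sum_pi_int_add_norm_rpow_neg_le {ι : Type*} [Fintype ι] {θ x : ℝ}
    (hθ : Fintype.card ι < θ) (hx : 1 ≤ x) (s : Finset (ι → ℤ)) :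
    ∑ p ∈ s, (x + ‖p‖) ^ (-θ) ≤
      (2 * θ / (θ - Fintype.card ι)) ^ Fintype.card ι * x ^ (Fintype.card ι - θ) := by
  have hx₀ : 0 < x := by linarith
  rcases isEmpty_or_nonempty ι with _ | _
  · calc ∑ p ∈ s, (x + ‖p‖) ^ (-θ) ≤ ∑ p : ι → ℤ, (x + ‖p‖) ^ (-θ) :=
          sum_le_univ_sum_of_nonneg fun p ↦ by positivity
      _ ≤ _ := by simp [norm_of_subsingleton]
  set N := Fintype.card ι with hN
  have hN₀ : (0 : ℝ) < N := mod_cast Fintype.card_pos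
  have hα : 1 < θ / N := (one_lt_div hN₀).2 hθ
  have le_prod (p : ι → ℤ) : (x + ‖p‖) ^ (-θ) ≤ ∏ c, (x + ‖p c‖) ^ (-(θ / N)) :=
    calc (x + ‖p‖) ^ (-θ) = ∏ _c : ι, (x + ‖p‖) ^ (-(θ / N)) := by
          rw [prod_const, card_univ, ← hN, ← rpow_mul_natCast (by positivity)]
          congr 1
          field_simp
      _ ≤ ∏ c, (x + ‖p c‖) ^ (-(θ / N)) := by
          refine prod_le_prod (fun c _ ↦ by positivity) fun c _ ↦
            rpow_le_rpow_of_nonpos (by positivity) ?_ (by linarith)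
          grw [norm_le_pi_norm p c]
  calc ∑ p ∈ s, (x + ‖p‖) ^ (-θ) ≤ ∑ p ∈ s, ∏ c, (x + ‖p c‖) ^ (-(θ / N)) :=
        sum_le_sum fun p _ ↦ le_prod p
    _ ≤ (2 * (θ / N) / (θ / N - 1) * x ^ (1 - θ / N)) ^ N :=
        sum_prod_apply_le_pow (f := fun a : ℤ ↦ (x + ‖a‖) ^ (-(θ / N))) (fun a ↦ by positivity)
          (sum_int_add_norm_rpow_neg_le hα hx) s
    _ = (2 * θ / (θ - N)) ^ N * x ^ (N - θ) := by
        rw [mul_pow, ← rpow_mul_natCast hx₀.le]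
        congr 2 <;> field_simp

theorem exists_Icc_add_subset_Icc {ι : Type*} {m R : ℕ} {q : ι → ℤ} (hR : R ≤ m)
    (hq : q ∈ Set.Icc 0 (m : ι → ℤ)) :
    ∃ a : ι → ℤ, Set.Icc a (a + R) ⊆ Set.Icc 0 (m : ι → ℤ) ∧ q ∈ Set.Icc a (a + R) := by
  refine ⟨(q - R) ⊔ 0, Set.Icc_subset_Icc le_sup_right fun c ↦ ?_, fun c ↦ ?_, fun c ↦ ?_⟩ <;>
  · have hqc₀ : 0 ≤ q c := hq.1 c
    have hqcm : q c ≤ m := hq.2 c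
    simp only [Pi.add_apply, Pi.sup_apply, Pi.sub_apply, Pi.natCast_apply, Pi.zero_apply]
    omega

theorem norm_sub_le_of_mem_Icc_add {ι : Type*} [Fintype ι] {R : ℕ} {a q q' : ι → ℤ}
    (hq : q ∈ Set.Icc a (a + R)) (hq' : q' ∈ Set.Icc a (a + R)) : ‖q - q'‖ ≤ R := by
  refine (pi_norm_le_iff_of_nonneg R.cast_nonneg).2 fun c ↦ ?_
  have hqc := And.intro (hq.1 c) (hq.2 c)
  have hqc' := And.intro (hq'.1 c) (hq'.2 c)
  simp only [Pi.add_apply, Pi.natCast_apply] at hqc hqc'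
  have : |q c - q' c| ≤ R := abs_le.2 ⟨by omega, by omega⟩
  rw [Pi.sub_apply, Int.norm_eq_abs]
  exact_mod_cast this

theorem card_pi_Icc_add_natCast {ι : Type*} [Fintype ι] [DecidableEq ι] (a : ι → ℤ) (R : ℕ) :
    #(Icc a (a + R)) = (R + 1) ^ Fintype.card ι := by
  have (c : ι) : (a c + R + 1 - a c).toNat = R + 1 := by omega
  simp [Pi.card_Icc, this]

section LatticeSum
variable {E ι J : Type*} [PseudoMetricSpace E] [Fintype ι] [Fintype J]
  {X : J → E} {p : J → ι → ℤ} {d θ L ρ : ℝ} {m : ℕ} {i : J} {y : E}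

theorem sum_one_add_dist_rpow_neg_le (hθ : Fintype.card ι < θ) (hd : 0 < d)
    (hp : p.Injective) (hX : ∀ j, d * ‖p i - p j‖ ≤ dist (X i) (X j))
    (hy : ∀ j, dist y (X i) ≤ dist y (X j)) (hdy : d ≤ 1 + dist y (X i)) :
    ∑ j, (1 + dist y (X j)) ^ (-θ) ≤ 3 ^ θ * (2 * θ / (θ - Fintype.card ι)) ^ Fintype.card ι /
      ((1 + dist y (X i)) ^ (θ - Fintype.card ι) * d ^ Fintype.card ι) := by
  classical
  set ρ := 1 + dist y (X i)
  set N := Fintype.card ι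
  have hρ₀ : 0 < ρ := by positivity
  have hθ₀ : 0 ≤ θ := N.cast_nonneg.trans hθ.le
  have one_add_dist_ge (j : J) : d / 3 * (ρ / d + ‖p i - p j‖) ≤ 1 + dist y (X j) := by
    have htri := dist_triangle_left (X i) (X j) y
    calc d / 3 * (ρ / d + ‖p i - p j‖) = (ρ + d * ‖p i - p j‖) / 3 := by field_simp
      _ ≤ 1 + dist y (X j) := by linarith [hX j, hy j, dist_nonneg (x := y) (y := X j)]
  calc ∑ j, (1 + dist y (X j)) ^ (-θ)
      ≤ ∑ j, (d / 3 * (ρ / d + ‖p i - p j‖)) ^ (-θ) := sum_le_sum fun j _ ↦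
        rpow_le_rpow_of_nonpos (by positivity) (one_add_dist_ge j) (neg_nonpos.2 hθ₀)
    _ = (d / 3) ^ (-θ) * ∑ q ∈ univ.image fun j ↦ p i - p j, (ρ / d + ‖q‖) ^ (-θ) := by
        rw [sum_image fun j _ j' _ h ↦ hp (sub_right_injective h), mul_sum]
        exact sum_congr rfl fun j _ ↦ mul_rpow (by positivity) (by positivity)
    _ ≤ (d / 3) ^ (-θ) * ((2 * θ / (θ - N)) ^ N * (ρ / d) ^ (N - θ)) := by
        gcongr
        exact sum_pi_int_add_norm_rpow_neg_le hθ ((one_le_div hd).2 hdy) _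
    _ = 3 ^ θ * (2 * θ / (θ - N)) ^ N / (ρ ^ (θ - N) * d ^ N) := by
        rw [div_rpow hd.le (by norm_num), div_rpow hρ₀.le hd.le, rpow_sub hd, rpow_natCast,
          rpow_neg hd.le, rpow_neg (by norm_num), ← neg_sub θ, rpow_neg hρ₀.le]
        field_simp

open Classical in
theorem div_pow_le_card_dist_le (hd : 0 < d) (hL : 0 ≤ L) (hρ : 0 ≤ ρ) (hρm : ρ ≤ m * d)
    (hp : Set.range p = Set.Icc 0 (m : ι → ℤ))
    (hX : ∀ j, dist (X i) (X j) ≤ L * (d * ‖p i - p j‖)) :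
    (ρ / d) ^ Fintype.card ι ≤ #{j | dist (X i) (X j) ≤ L * ρ} := by
  set R := ⌊ρ / d⌋₊
  have hR : R ≤ m := Nat.floor_le_of_le ((div_le_iff₀ hd).2 hρm)
  obtain ⟨a, hsub, hi⟩ := exists_Icc_add_subset_Icc hR (hp ▸ Set.mem_range_self i)
  have hsurj : Set.SurjOn p ({j | dist (X i) (X j) ≤ L * ρ} : Finset J) (Icc a (a + R)) := by
    rw [coe_Icc]
    intro q hq
    obtain ⟨j, rfl⟩ : q ∈ Set.range p := hp ▸ hsub hq
    have hij : d * ‖p i - p j‖ ≤ ρ := by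
      grw [norm_sub_le_of_mem_Icc_add hi hq, ← le_div_iff₀' hd]
      exact Nat.floor_le (by positivity)
    refine ⟨j, mem_coe.2 (mem_filter.2 ⟨mem_univ j, (hX j).trans ?_⟩), rfl⟩
    gcongr
  calc (ρ / d) ^ Fintype.card ι ≤ (R + 1) ^ Fintype.card ι := by
        gcongr
        exact (Nat.lt_floor_add_one _).le
    _ = #(Icc a (a + R)) := by exact_mod_cast (card_pi_Icc_add_natCast a R).symm
    _ ≤ #{j | dist (X i) (X j) ≤ L * ρ} := by exact_mod_cast card_le_card_of_surjOn p hsurj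

theorem le_sum_one_add_dist_rpow_neg (hθ : 0 ≤ θ) (hd : 0 < d) (hL : 0 ≤ L)
    (hp : Set.range p = Set.Icc 0 (m : ι → ℤ))
    (hX : ∀ j, dist (X i) (X j) ≤ L * (d * ‖p i - p j‖)) (hym : 1 + dist y (X i) ≤ m * d) :
    1 / ((1 + L) ^ θ * (1 + dist y (X i)) ^ (θ - Fintype.card ι) * d ^ Fintype.card ι) ≤
      ∑ j, (1 + dist y (X j)) ^ (-θ) := by
  classical
  set ρ := 1 + dist y (X i)
  have hρ : 0 < ρ := by positivity
  have term_ge (j : J) (hj : j ∈ ({j | dist (X i) (X j) ≤ L * ρ} : Finset J)) :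
      ((1 + L) * ρ) ^ (-θ) ≤ (1 + dist y (X j)) ^ (-θ) := by
    refine rpow_le_rpow_of_nonpos (by positivity) ?_ (by linarith)
    linarith [dist_triangle y (X i) (X j), (mem_filter.1 hj).2]
  calc 1 / ((1 + L) ^ θ * ρ ^ (θ - Fintype.card ι) * d ^ Fintype.card ι)
      = (ρ / d) ^ Fintype.card ι * ((1 + L) * ρ) ^ (-θ) := by
        rw [rpow_neg (by positivity), mul_rpow (by positivity) hρ.le, rpow_sub hρ, rpow_natCast,
          div_pow]
        field_simp
    _ ≤ #{j | dist (X i) (X j) ≤ L * ρ} * ((1 + L) * ρ) ^ (-θ) := by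
        gcongr
        exact div_pow_le_card_dist_le hd hL hρ.le hym hp hX
    _ ≤ ∑ j with dist (X i) (X j) ≤ L * ρ, (1 + dist y (X j)) ^ (-θ) := by
        rw [← nsmul_eq_mul]
        exact card_nsmul_le_sum _ _ _ term_ge
    _ ≤ ∑ j, (1 + dist y (X j)) ^ (-θ) :=
        sum_le_univ_sum_of_nonneg fun j ↦ by positivity

end LatticeSum

/-- The point `(d q, 0, …, 0) ∈ ℝⁿ` with lattice coordinates `q ∈ ℤᵏ`, for `k ≤ n`. -/
def gridPoint (n : ℕ) {k : ℕ} (d : ℝ) (q : Fin k → ℤ) : EuclideanSpace ℝ (Fin n) :=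
  WithLp.toLp 2 fun c ↦ if hc : (c : ℕ) < k then d * q ⟨c, hc⟩ else 0

section gridPoint
variable {n k : ℕ} {d : ℝ}

theorem gridPoint_castLE (hkn : k ≤ n) (q : Fin k → ℤ) (c : Fin k) :
    gridPoint n d q (c.castLE hkn) = d * q c := by
  simp [gridPoint]

theorem gridPoint_injective (hkn : k ≤ n) (hd : d ≠ 0) :
    (gridPoint n d : (Fin k → ℤ) → EuclideanSpace ℝ (Fin n)).Injective := by
  intro q q' h
  ext c
  have hc : d * q c = d * q' c := by rw [← gridPoint_castLE hkn, h, gridPoint_castLE]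
  exact_mod_cast mul_left_cancel₀ hd hc

theorem mul_norm_sub_le_dist_gridPoint (hkn : k ≤ n) (hd : 0 < d) (q q' : Fin k → ℤ) :
    d * ‖q - q'‖ ≤ dist (gridPoint n d q) (gridPoint n d q') := by
  rw [← le_div_iff₀' hd]
  refine (pi_norm_le_iff_of_nonneg (by positivity)).2 fun c ↦ (le_div_iff₀' hd).2 ?_
  calc d * ‖(q - q') c‖ = ‖(gridPoint n d q - gridPoint n d q') (c.castLE hkn)‖ := by
        rw [PiLp.sub_apply, gridPoint_castLE, gridPoint_castLE, ← mul_sub, norm_mul,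
          norm_of_nonneg hd.le, Pi.sub_apply, Int.norm_eq_abs, Int.cast_sub, Real.norm_eq_abs]
    _ ≤ dist (gridPoint n d q) (gridPoint n d q') := by
        rw [dist_eq_norm]
        exact PiLp.norm_apply_le _ _

theorem dist_gridPoint_le (hd : 0 ≤ d) (q q' : Fin k → ℤ) :
    dist (gridPoint n d q) (gridPoint n d q') ≤ √n * (d * ‖q - q'‖) := by
  have coord_le (c : Fin n) :
      dist (gridPoint n d q c) (gridPoint n d q' c) ≤ d * ‖q - q'‖ := by
    by_cases hc : (c : ℕ) < k
    · simp only [gridPoint, hc, dite_true, dist_eq_norm, ← mul_sub, norm_mul, norm_of_nonneg hd]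
      gcongr
      exact_mod_cast norm_le_pi_norm (q - q') ⟨c, hc⟩
    · simp only [gridPoint, hc, dite_false, dist_self]
      positivity
  calc dist (gridPoint n d q) (gridPoint n d q')
      = √(∑ c, dist (gridPoint n d q c) (gridPoint n d q' c) ^ 2) := EuclideanSpace.dist_eq _ _
    _ ≤ √(∑ _c : Fin n, (d * ‖q - q'‖) ^ 2) := by
        gcongr
        exact coord_le _
    _ = √n * (d * ‖q - q'‖) := by
        rw [sum_const, card_univ, Fintype.card_fin, nsmul_eq_mul, sqrt_mul n.cast_nonneg,
          sqrt_sq (by positivity)]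

end gridPoint

theorem latticeEnum.exists_coords {n k m : ℕ} {d : ℝ}
    {X : Fin ((m + 1) ^ k) → EuclideanSpace ℝ (Fin n)} (hkn : k ≤ n) (hd : d ≠ 0)
    (hX : latticeEnum n k m d X) :
    ∃ p : Fin ((m + 1) ^ k) → Fin k → ℤ, p.Injective ∧
      Set.range p = Set.Icc 0 (m : Fin k → ℤ) ∧ ∀ j, X j = gridPoint n d (p j) := by
  obtain ⟨hinj, hcoord, hsurj⟩ := hX
  choose q hq_mem hq_zero hqX using hcoord
  let p j (c : Fin k) : ℤ := q j (c.castLE hkn)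
  have hpX j : X j = gridPoint n d (p j) := by
    ext c
    by_cases hc : (c : ℕ) < k
    · simp [gridPoint, hqX, p, hc]
    · simp [gridPoint, hqX, hc, hq_zero j c (not_lt.1 hc)]
  have hX_comp : X = gridPoint n d ∘ p := funext hpX
  have hp_inj : p.Injective := .of_comp (hX_comp ▸ hinj)
  refine ⟨p, hp_inj, Set.Subset.antisymm ?_ fun r hr ↦ ?_, hpX⟩
  · rintro _ ⟨j, rfl⟩
    exact ⟨fun c ↦ (hq_mem j (c.castLE hkn) c.2).1, fun c ↦ (hq_mem j (c.castLE hkn) c.2).2⟩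
  · obtain ⟨j, hj⟩ := hsurj (fun c ↦ if hc : (c : ℕ) < k then r ⟨c, hc⟩ else 0)
      (fun c hc ↦ by simpa [hc] using ⟨hr.1 ⟨c, hc⟩, hr.2 ⟨c, hc⟩⟩)
      (fun c hc ↦ by simp [hc.not_gt])
    refine ⟨j, gridPoint_injective hkn hd ?_⟩
    rw [← hpX]
    ext c
    simp only [hj, gridPoint]
    split_ifs <;> simp

theorem stmt_4_general {n k : ℕ} {θ : ℝ} (hkn : k ≤ n) (hθ : (k : ℝ) < θ) :
    ∃ C > (1 : ℝ), ∀ (m : ℕ) (d : ℝ), 0 < d →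
      ∀ X : Fin ((m + 1) ^ k) → EuclideanSpace ℝ (Fin n), latticeEnum n k m d X →
      ∀ i, ∀ y : EuclideanSpace ℝ (Fin n),
        d ≤ 1 + ‖y - X i‖ → 1 + ‖y - X i‖ ≤ m * d →
        (∀ j, ‖y - X i‖ ≤ ‖y - X j‖) →
        1 / (C * (1 + ‖y - X i‖) ^ (θ - (k : ℝ)) * d ^ k) ≤
          (∑ j, (1 + ‖y - X j‖) ^ (-θ)) ∧
        (∑ j, (1 + ‖y - X j‖) ^ (-θ)) ≤
          C / ((1 + ‖y - X i‖) ^ (θ - (k : ℝ)) * d ^ k) := by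
  have hθ₀ : 0 ≤ θ := k.cast_nonneg.trans hθ.le
  have : 0 < θ - k := sub_pos.2 hθ
  set lower := (1 + √n) ^ θ
  set upper := 3 ^ θ * (2 * θ / (θ - k)) ^ k
  have hlower : 0 < lower := by positivity
  have hupper : 0 ≤ upper := by positivity
  refine ⟨1 + lower + upper, by linarith, fun m d hd X hX i y hdy hym hy ↦ ?_⟩
  simp only [← dist_eq_norm] at hdy hym hy ⊢
  obtain ⟨p, hp_inj, hp_range, hpX⟩ := hX.exists_coords hkn hd.ne'
  have hle := le_sum_one_add_dist_rpow_neg hθ₀ hd (sqrt_nonneg n) hp_range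
    (fun j ↦ by simpa only [hpX] using dist_gridPoint_le hd.le (p i) (p j)) hym
  have hge := sum_one_add_dist_rpow_neg_le (by simpa using hθ) hd hp_inj
    (fun j ↦ by simpa only [hpX] using mul_norm_sub_le_dist_gridPoint hkn hd (p i) (p j)) hy hdy
  simp only [Fintype.card_fin] at hle hge
  constructor
  · refine le_trans ?_ hle
    gcongr
    linarith
  · refine hge.trans ?_
    gcongr
    linarith

theorem one_add_le_mul_of_lt_max {m d r : ℝ} (hd : 1 ≤ d) (hdr : d ≤ r)
    (hr : r < max (m / 4) 1 * d) : 1 + r ≤ m * d := by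
  have hrm : r < m / 4 * d := by
    rcases lt_max_iff.1 ((div_lt_iff₀ (by linarith)).2 hr) with h | h
    · exact (div_lt_iff₀ (by linarith)).1 h
    · exact absurd ((div_lt_one (by linarith)).1 h) hdr.not_gt
  linarith

theorem stmt_4 (n k : ℕ) (s β θ : ℝ) (hn0 : 0 < n) (hs0 : 0 < s) (hs1 : s < 1)
    (hn : 2 * s + 2 < (n : ℝ)) (hk1 : 1 ≤ k) (hk2 : (k : ℝ) < ((n : ℝ) - 2 * s) / 2)
    (hβ1 : (n : ℝ) - 2 * s < β) (hβ2 : β < (n : ℝ)) (hθ : (k : ℝ) < θ) :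
    ∃ C > (1 : ℝ), ∀ m l : ℕ, 1 ≤ m → 1 ≤ l →
      ∀ lam : ℝ, lam = (l : ℝ) ^ (((n : ℝ) - 2 * s) / (β - (n : ℝ) + 2 * s)) →
      ∀ X : Fin ((m + 1) ^ k) → EuclideanSpace ℝ (Fin n), latticeEnum n k m (lam * l) X →
      ∀ i, ∀ y : EuclideanSpace ℝ (Fin n),
        lam * l ≤ ‖y - X i‖ → ‖y - X i‖ < max ((m : ℝ) / 4) 1 * (lam * l) →
        (∀ j, ‖y - X i‖ ≤ ‖y - X j‖) →
        1 / (C * (1 + ‖y - X i‖) ^ (θ - (k : ℝ)) * (lam * l) ^ k) ≤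
          (∑ j, (1 + ‖y - X j‖) ^ (-θ)) ∧
        (∑ j, (1 + ‖y - X j‖) ^ (-θ)) ≤
          C / ((1 + ‖y - X i‖) ^ (θ - (k : ℝ)) * (lam * l) ^ k) := by
  have hkn : k ≤ n := by
    rify
    linarith [k.cast_nonneg (α := ℝ)]
  obtain ⟨C, hC, hbound⟩ := stmt_4_general hkn hθ
  refine ⟨C, hC, fun m l _ hl lam hlam X hX i y hdy hym hy ↦ ?_⟩
  have hl' : (1 : ℝ) ≤ l := mod_cast hl
  have hd : 1 ≤ lam * l := one_le_mul_of_one_le_of_one_le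
    (hlam ▸ one_le_rpow hl' (div_nonneg (by linarith) (by linarith))) hl'
  exact hbound m _ (by linarith) X hX i y (by linarith) (one_add_le_mul_of_lt_max hd hdy hym) hy
end
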